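/- Commutator identity: let d ≥ 2, γ ∈ (0,1), let D ⊂ ℝ^d be a bounded C^{1+γ} domain with defining function Φ, and set v(x) = -∫_D ∇N(x-y) dy. Then for every x ∉ ∂D (where v is differentiable), the absolutely convergent integral ∫_D ∇²N(x-y)(∇Φ(x) - ∇Φ(y)) dy equals -∇v(x)(∇Φ(x)) - χ_D(x) ∇Φ(x), where ∇²N(z) is the matrix with entries (1/ω_{d-1})(δ_{ij}/|z|^d - d z_i z_j/|z|^{d+2}) for z ≠ 0 and ∇v(x) is the derivative matrix of v at x. -/

import Mathlib

open MeasureTheory Metric Set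
open scoped RealInnerProductSpace

noncomputable def sphereVol (d : ℕ) : ℝ :=
  d * (volume (Metric.ball (0 : EuclideanSpace ℝ (Fin d)) 1)).toReal

noncomputable def gradN (d : ℕ) (y : EuclideanSpace ℝ (Fin d)) : EuclideanSpace ℝ (Fin d) :=
  (sphereVol d * ‖y‖ ^ d)⁻¹ • y

noncomputable def hessN (d : ℕ) (z w : EuclideanSpace ℝ (Fin d)) : EuclideanSpace ℝ (Fin d) :=
  (sphereVol d)⁻¹ • ((‖z‖ ^ d)⁻¹ • w - ((d : ℝ) * (‖z‖ ^ (d + 2))⁻¹ * ⟪z, w⟫) • z)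

/-- `Φ` is a defining function of class `C^{1+γ}` for the set `D`. -/
def IsDefining (d : ℕ) (γ : ℝ) (D : Set (EuclideanSpace ℝ (Fin d)))
    (Φ : EuclideanSpace ℝ (Fin d) → ℝ) : Prop :=
  ContDiff ℝ 1 Φ ∧
  (∃ K : ℝ, ∀ x y, ‖gradient Φ x - gradient Φ y‖ ≤ K * ‖x - y‖ ^ γ) ∧
  D = {x | Φ x < 0} ∧
  frontier D = {x | Φ x = 0} ∧
  ∀ x ∈ frontier D, gradient Φ x ≠ 0

/-- `D` is a bounded domain of class `C^{1+γ}`. -/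
def IsC1Domain (d : ℕ) (γ : ℝ) (D : Set (EuclideanSpace ℝ (Fin d))) : Prop :=
  IsOpen D ∧ Bornology.IsBounded D ∧ ∃ Φ, IsDefining d γ D Φ

/-!
Let `K_a` be `∇N` smoothly cut off to zero near the origin. Since `D K_a` is symmetric and
`min Φ 0` is Lipschitz, integrating by parts twice exchanges two derivatives and gives
`∫_D D K_a(x - y) ∇Φ(y) dy = ∫_D (div K_a)(x - y) ∇Φ(y) dy`, with no boundary term because `Φ`
vanishes on `∂D`. As `N` is harmonic off the origin, `div K_a` is a radial approximate identity, so
the right-hand side tends to `χ_D(x) ∇Φ(x)` for `x ∉ ∂D`. For such `x`, replacing `∇N` by `K_a`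
with a small cut-off radius changes `∫_D ∇N(z - y) dy` only by a constant near `x`, so
`∫_D D K_a(x - y) dy = -∇v(x)`. Hence `∫_D D K_a(x - y) (∇Φ(x) - ∇Φ(y)) dy` tends to the
right-hand side of the formula; it also tends to the left-hand side, by dominated convergence with
majorant a multiple of `|x - y|^{-d} |∇Φ(x) - ∇Φ(y)|`.
-/

open Filter Topology

section SublevelSet

variable {E : Type*} [NormedAddCommGroup E] [NormedSpace ℝ E]

lemma lineDeriv_min_zero {Φ : E → ℝ} (hΦ : Differentiable ℝ Φ) (v y : E) :
    lineDeriv ℝ (fun z => min (Φ z) 0) y v =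
      Set.indicator {z | Φ z < 0} (fun z => fderiv ℝ Φ z v) y := by
  by_cases hy : Φ y < 0
  · have hmin : (fun z => min (Φ z) 0) =ᶠ[𝓝 y] Φ := by
      filter_upwards [hΦ.continuous.continuousAt.eventually_lt continuousAt_const hy] with z hz
      exact min_eq_left hz.le
    rw [indicator_of_mem (by exact hy), hmin.lineDeriv_eq, (hΦ y).lineDeriv_eq_fderiv]
  · rw [indicator_of_notMem (by exact hy)]
    refine IsLocalMax.deriv_eq_zero (.of_forall fun t => ?_)
    simp [min_eq_right (not_lt.1 hy)]

variable [FiniteDimensional ℝ E]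

lemma exists_smooth_cutoff {s : Set E} (hs : Bornology.IsBounded s) :
    ∃ χ : E → ℝ, ContDiff ℝ 1 χ ∧ HasCompactSupport χ ∧ (∀ y, 0 ≤ χ y) ∧
      ∀ y ∈ s, χ =ᶠ[𝓝 y] 1 := by
  obtain ⟨R, hR, hsR⟩ := hs.subset_ball_lt 0 0
  let χ : ContDiffBump (0 : E) := ⟨R, R + 1, hR, by linarith⟩
  exact ⟨χ, χ.contDiff, χ.hasCompactSupport, fun _ => χ.nonneg, fun y hy =>
    χ.eventuallyEq_one_of_mem_ball (hsR hy)⟩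

lemma exists_lipschitzWith_min_zero {Φ : E → ℝ} (hΦ : ContDiff ℝ 1 Φ)
    (hbdd : Bornology.IsBounded {y | Φ y < 0}) : ∃ C, LipschitzWith C fun y => min (Φ y) 0 := by
  obtain ⟨χ, hχ, hχc, hχ0, hχ1⟩ := exists_smooth_cutoff hbdd
  obtain ⟨C, hC⟩ := (hχ.mul hΦ).lipschitzWith_of_hasCompactSupport hχc.mul_right one_ne_zero
  have hmin : (fun y => min (χ y * Φ y) 0) = fun y => min (Φ y) 0 := by
    funext y
    rcases lt_or_ge (Φ y) 0 with hy | hy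
    · rw [(hχ1 y hy).eq_of_nhds, Pi.one_apply, one_mul]
    · rw [min_eq_right hy, min_eq_right (mul_nonneg (hχ0 y) hy)]
  exact ⟨C, hmin ▸ hC.min_const 0⟩

variable [MeasurableSpace E] [BorelSpace E] {μ : Measure E} [μ.IsAddHaarMeasure] {Φ g : E → ℝ}

lemma setIntegral_fderiv_mul_eq_neg (hΦ : ContDiff ℝ 1 Φ)
    (hbdd : Bornology.IsBounded {y | Φ y < 0}) (hg : ContDiff ℝ 1 g) (v : E) :
    ∫ y in {y | Φ y < 0}, fderiv ℝ Φ y v * g y ∂μ =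
      -∫ y in {y | Φ y < 0}, Φ y * fderiv ℝ g y v ∂μ := by
  obtain ⟨χ, hχ, hχc, -, hχ1⟩ := exists_smooth_cutoff hbdd
  have hχ1' : ∀ y ∈ {y | Φ y < 0}, χ y = 1 := fun y hy => (hχ1 y hy).eq_of_nhds
  have hD : MeasurableSet {y | Φ y < 0} :=
    measurableSet_lt hΦ.continuous.measurable measurable_const
  obtain ⟨C, hC⟩ := exists_lipschitzWith_min_zero hΦ hbdd
  obtain ⟨C', hC'⟩ := (hχ.mul hg).lipschitzWith_of_hasCompactSupport hχc.mul_right one_ne_zero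
  have hfderiv : ∀ y ∈ {y | Φ y < 0}, fderiv ℝ (fun y => χ y * g y) y v = fderiv ℝ g y v :=
    fun y hy => by
      have : (fun y => χ y * g y) =ᶠ[𝓝 y] g := by
        filter_upwards [hχ1 y hy] with z hz
        simp [hz]
      rw [this.fderiv_eq]
  calc
    _ = ∫ y, lineDeriv ℝ (fun z => min (Φ z) 0) y v * (χ y * g y) ∂μ := by
      rw [← integral_indicator hD]
      refine integral_congr_ae (.of_forall fun y => ?_)
      by_cases hy : y ∈ {y | Φ y < 0} <;>
        simp [lineDeriv_min_zero (hΦ.differentiable one_ne_zero), hy, hχ1']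
    _ = ∫ y, lineDeriv ℝ (fun y => χ y * g y) y (-v) * min (Φ y) 0 ∂μ :=
      hC.integral_lineDeriv_mul_eq hC' hχc.mul_right v
    _ = _ := by
      rw [← integral_neg, ← integral_indicator hD]
      refine integral_congr_ae (.of_forall fun y => ?_)
      by_cases hy : y ∈ {y | Φ y < 0}
      · have hd : DifferentiableAt ℝ (fun y => χ y * g y) y :=
          (hχ.mul hg).differentiable one_ne_zero y
        have hneg : Φ y < 0 := hy
        simp only [hd.lineDeriv_eq_fderiv, map_neg, hfderiv y hy, min_eq_left hneg.le,
          indicator_of_mem hy]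
        ring
      · have : 0 ≤ Φ y := not_lt.1 hy
        simp [hy, this]

lemma setIntegral_fderiv_mul_fderiv_comm (hΦ : ContDiff ℝ 1 Φ)
    (hbdd : Bornology.IsBounded {y | Φ y < 0}) (hg : ContDiff ℝ 2 g) (v w : E) :
    ∫ y in {y | Φ y < 0}, fderiv ℝ Φ y v * fderiv ℝ g y w ∂μ =
      ∫ y in {y | Φ y < 0}, fderiv ℝ Φ y w * fderiv ℝ g y v ∂μ := by
  have hg' (u : E) : ContDiff ℝ 1 fun y => fderiv ℝ g y u :=
    (hg.fderiv_right (by norm_num)).clm_apply contDiff_const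
  have hsymm (y : E) : fderiv ℝ (fun y => fderiv ℝ g y w) y v =
      fderiv ℝ (fun y => fderiv ℝ g y v) y w := by
    have hd := (hg.fderiv_right (m := 1) (by norm_num)).differentiable one_ne_zero y
    rw [fderiv_clm_apply hd (differentiableAt_const w),
      fderiv_clm_apply hd (differentiableAt_const v)]
    simpa using hg.contDiffAt.isSymmSndFDerivAt (by simp) v w
  rw [setIntegral_fderiv_mul_eq_neg hΦ hbdd (hg' w), setIntegral_fderiv_mul_eq_neg hΦ hbdd (hg' v)]
  simp only [hsymm]

end SublevelSet

section Divergence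

/-- The divergence of a vector field, as the trace of its derivative, so that no basis is chosen;
it is `0` where the field is not differentiable. For a truncated gradient kernel it becomes an
approximate identity. -/
noncomputable def divergence {E : Type*} [NormedAddCommGroup E] [NormedSpace ℝ E] (K : E → E)
    (y : E) : ℝ :=
  LinearMap.trace ℝ E (fderiv ℝ K y)

lemma continuous_divergence {E : Type*} [NormedAddCommGroup E] [NormedSpace ℝ E]
    [FiniteDimensional ℝ E] {K : E → E} (hK : ContDiff ℝ 1 K) : Continuous (divergence K) :=
  (LinearMap.trace ℝ E ∘ₗ ContinuousLinearMap.coeLM ℝ).continuous_of_finiteDimensional.comp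
    (hK.continuous_fderiv one_ne_zero)

lemma continuous_gradient {E : Type*} [NormedAddCommGroup E] [InnerProductSpace ℝ E]
    [CompleteSpace E] {Φ : E → ℝ} (hΦ : ContDiff ℝ 1 Φ) : Continuous (gradient Φ) :=
  (InnerProductSpace.toDual ℝ E).symm.continuous.comp (hΦ.continuous_fderiv one_ne_zero)

lemma integrableOn_of_continuous_of_isBounded {X F : Type*} [MetricSpace X] [ProperSpace X]
    [MeasurableSpace X] [OpensMeasurableSpace X] {μ : Measure X} [IsFiniteMeasureOnCompacts μ]
    [NormedAddCommGroup F] {f : X → F} {s : Set X} (hf : Continuous f)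
    (hs : Bornology.IsBounded s) : IntegrableOn f s μ :=
  (hf.continuousOn.integrableOn_compact hs.isCompact_closure).mono_set subset_closure

variable {E : Type*} [NormedAddCommGroup E] [InnerProductSpace ℝ E] [FiniteDimensional ℝ E]
  [MeasurableSpace E] [BorelSpace E]

lemma setIntegral_fderiv_gradient {μ : Measure E} [μ.IsAddHaarMeasure] {Φ : E → ℝ} {K : E → E}
    (hΦ : ContDiff ℝ 1 Φ) (hbdd : Bornology.IsBounded {y | Φ y < 0}) (hK : ContDiff ℝ 2 K)
    (hsymm : ∀ y, (fderiv ℝ K y : E →ₗ[ℝ] E).IsSymmetric) :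
    ∫ y in {y | Φ y < 0}, fderiv ℝ K y (gradient Φ y) ∂μ =
      ∫ y in {y | Φ y < 0}, divergence K y • gradient Φ y ∂μ := by
  let e := stdOrthonormalBasis ℝ E
  have hDK : Continuous fun y => fderiv ℝ K y (gradient Φ y) :=
    (hK.continuous_fderiv two_ne_zero).clm_apply (continuous_gradient hΦ)
  have hdivK : Continuous fun y => divergence K y • gradient Φ y :=
    (continuous_divergence (hK.of_le one_le_two)).smul (continuous_gradient hΦ)
  have hcoord : ∀ i, ContDiff ℝ 2 fun z => ⟪e i, K z⟫ := fun i => contDiff_const.inner ℝ hK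
  have hDcoord : ∀ i y w, fderiv ℝ (fun z => ⟪e i, K z⟫) y w = ⟪e i, fderiv ℝ K y w⟫ :=
    fun i y w => by
      rw [fderiv_inner_apply ℝ (differentiableAt_const _) (hK.differentiable two_ne_zero y)]
      simp
  have hterm : ∀ i u w, IntegrableOn
      (fun y => fderiv ℝ Φ y u * fderiv ℝ (fun z => ⟪e i, K z⟫) y w) {y | Φ y < 0} μ :=
    fun i u w => integrableOn_of_continuous_of_isBounded
      (((hΦ.continuous_fderiv one_ne_zero).clm_apply continuous_const).mul
        (((hcoord i).continuous_fderiv two_ne_zero).clm_apply continuous_const)) hbdd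
  refine ext_inner_left ℝ fun u => ?_
  rw [← integral_inner (integrableOn_of_continuous_of_isBounded hDK hbdd),
    ← integral_inner (integrableOn_of_continuous_of_isBounded hdivK hbdd)]
  have hleft : ∀ y, ⟪u, fderiv ℝ K y (gradient Φ y)⟫ =
      ∑ i, fderiv ℝ Φ y (e i) * fderiv ℝ (fun z => ⟪e i, K z⟫) y u := fun y => by
    rw [← ContinuousLinearMap.coe_coe (fderiv ℝ K y), ← hsymm y, real_inner_comm,
      ← e.sum_inner_mul_inner]
    simp [hDcoord, inner_gradient_left]
  have hright : ∀ y, ⟪u, divergence K y • gradient Φ y⟫ =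
      ∑ i, fderiv ℝ Φ y u * fderiv ℝ (fun z => ⟪e i, K z⟫) y (e i) := fun y => by
    rw [inner_smul_right, real_inner_comm, inner_gradient_left, divergence,
      LinearMap.trace_eq_sum_inner _ e, Finset.sum_mul]
    simp [hDcoord, mul_comm]
  simp_rw [hleft, hright]
  rw [integral_finsetSum _ fun i _ => hterm i _ _, integral_finsetSum _ fun i _ => hterm i _ _]
  exact Finset.sum_congr rfl fun i _ => setIntegral_fderiv_mul_fderiv_comm hΦ hbdd (hcoord i) _ _

end Divergence

section Potential

variable {E F : Type*} [NormedAddCommGroup E] [NormedSpace ℝ E] [FiniteDimensional ℝ E]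
  [MeasurableSpace E] [BorelSpace E] {μ : Measure E} [NormedAddCommGroup F] {s : Set E} {x : E}

lemma eventually_mem_iff_of_notMem_frontier {X : Type*} [TopologicalSpace X] {s : Set X} {x : X}
    (hx : x ∉ frontier s) : ∀ᶠ y in 𝓝 x, (y ∈ s ↔ x ∈ s) := by
  by_cases hxs : x ∈ s
  · have hint : x ∈ interior s := (mem_interior_iff_notMem_frontier hxs).2 hx
    filter_upwards [mem_interior_iff_mem_nhds.1 hint] with y hy
    exact iff_of_true hy hxs
  · have hint : x ∈ interior sᶜ :=
      (mem_interior_iff_notMem_frontier hxs).2 (by rwa [frontier_compl])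
    filter_upwards [mem_interior_iff_mem_nhds.1 hint] with y hy
    exact iff_of_false hy hxs

lemma integrableOn_comp_sub_left [μ.IsAddHaarMeasure] {G : E → F} (hG : LocallyIntegrable G μ)
    (hs : Bornology.IsBounded s) (x : E) : IntegrableOn (fun y => G (x - y)) s μ := by
  have hcpt : IsCompact ((x - ·) '' closure s) :=
    hs.isCompact_closure.image (continuous_const.sub continuous_id)
  have hsub : s ⊆ (x - ·) ⁻¹' ((x - ·) '' closure s) :=
    fun y hy => mem_image_of_mem _ (subset_closure hy)
  exact (((Measure.measurePreserving_sub_left μ x).integrableOn_comp_preimage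
    (Homeomorph.subLeft x).measurableEmbedding).2 (hG.integrableOn_isCompact hcpt)).mono_set hsub

variable [NormedSpace ℝ F]

lemma hasFDerivAt_setIntegral_comp_sub [IsFiniteMeasureOnCompacts μ] {K : E → F}
    (hK : ContDiff ℝ 1 K) (hs : MeasurableSet s) (hbdd : Bornology.IsBounded s) (x : E) :
    HasFDerivAt (fun z => ∫ y in s, K (z - y) ∂μ) (∫ y in s, fderiv ℝ K (x - y) ∂μ) x := by
  have : Continuous (fderiv ℝ K) := hK.continuous_fderiv one_ne_zero
  obtain ⟨C, hC⟩ :=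
    ((isCompact_closedBall x 1).prod hbdd.isCompact_closure).exists_bound_of_continuousOn
      (f := fun p => fderiv ℝ K (p.1 - p.2)) (by fun_prop)
  refine hasFDerivAt_integral_of_dominated_of_fderiv_le (F := fun z y => K (z - y))
    (F' := fun z y => fderiv ℝ K (z - y)) (bound := fun _ => C) (ball_mem_nhds x one_pos)
    (.of_forall fun z => ?_) ?_ ?_ ?_ ?_ ?_
  · exact (integrableOn_of_continuous_of_isBounded (by fun_prop) hbdd).aestronglyMeasurable
  · exact integrableOn_of_continuous_of_isBounded (by fun_prop) hbdd
  · exact (integrableOn_of_continuous_of_isBounded (by fun_prop) hbdd).aestronglyMeasurable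
  · exact ae_restrict_of_forall_mem hs fun y hy z hz =>
      hC (z, y) ⟨ball_subset_closedBall hz, subset_closure hy⟩
  · exact integrableOn_of_continuous_of_isBounded continuous_const hbdd
  · exact .of_forall fun y z _ => by
      simpa [Function.comp_def] using
        (hK.differentiable one_ne_zero (z - y)).hasFDerivAt.comp z ((hasFDerivAt_id z).sub_const y)

variable [μ.IsAddHaarMeasure] {r : ℝ}

lemma setIntegral_comp_sub_eq_indicator {R : E → F} (hsx : ∀ y ∈ ball x (2 * r), (y ∈ s ↔ x ∈ s))
    (hR : ∀ z, r ≤ ‖z‖ → R z = 0) {z : E} (hz : z ∈ ball x r) :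
    ∫ y in s, R (z - y) ∂μ = s.indicator (fun _ => ∫ y, R y ∂μ) x := by
  have hvanish : ∀ y, ¬(y ∈ s ↔ x ∈ s) → R (z - y) = 0 := fun y hy => by
    refine hR _ (not_lt.1 fun hzy => hy (hsx y ?_))
    rw [mem_ball', two_mul]
    exact (dist_triangle x z y).trans_lt (add_lt_add (mem_ball'.1 hz) (by rwa [dist_eq_norm]))
  by_cases hxs : x ∈ s
  · rw [indicator_of_mem hxs, setIntegral_eq_integral_of_forall_compl_eq_zero fun y hy =>
      hvanish y fun h => hy (h.2 hxs), integral_sub_left_eq_self R μ z]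
  · rw [indicator_of_notMem hxs, setIntegral_eq_zero_of_forall_eq_zero fun y hy =>
      hvanish y fun h => hxs (h.1 hy)]

lemma hasFDerivAt_setIntegral_comp_sub_of_eq_off_ball {G K : E → F} (hG : LocallyIntegrable G μ)
    (hK : ContDiff ℝ 1 K) (hGK : ∀ z, r ≤ ‖z‖ → K z = G z) (hs : MeasurableSet s)
    (hbdd : Bornology.IsBounded s) (hr : 0 < r) (hsx : ∀ y ∈ ball x (2 * r), (y ∈ s ↔ x ∈ s)) :
    HasFDerivAt (fun z => ∫ y in s, G (z - y) ∂μ) (∫ y in s, fderiv ℝ K (x - y) ∂μ) x := by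
  have hsplit : (fun z => ∫ y in s, G (z - y) ∂μ) =ᶠ[𝓝 x] fun z =>
      ∫ y in s, K (z - y) ∂μ + s.indicator (fun _ => ∫ y, (G y - K y) ∂μ) x := by
    filter_upwards [ball_mem_nhds x hr] with z hz
    rw [← setIntegral_comp_sub_eq_indicator hsx (fun z hz => sub_eq_zero.2 (hGK z hz).symm) hz,
      integral_sub (integrableOn_comp_sub_left hG hbdd z)
        (integrableOn_comp_sub_left hK.continuous.locallyIntegrable hbdd z), add_sub_cancel]
  exact ((hasFDerivAt_setIntegral_comp_sub hK hs hbdd x).add_const _).congr_of_eventuallyEq hsplit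

end Potential

section Kernel

open Real (smoothTransition)

lemma differentiable_smoothTransition : Differentiable ℝ smoothTransition :=
  (Real.smoothTransition.contDiff (n := 1)).differentiable one_ne_zero

lemma deriv_smoothTransition_of_notMem_Ioo {u : ℝ} (hu : u ∉ Ioo 0 1) :
    deriv smoothTransition u = 0 := by
  rcases le_or_gt u 0 with h0 | h0
  · refine IsLocalMin.deriv_eq_zero (.of_forall fun v => ?_)
    simpa [Real.smoothTransition.zero_of_nonpos h0] using Real.smoothTransition.nonneg v
  · refine IsLocalMax.deriv_eq_zero (.of_forall fun v => ?_)
    simpa [Real.smoothTransition.one_of_one_le (not_lt.1 fun h1 => hu ⟨h0, h1⟩)]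
      using Real.smoothTransition.le_one v

lemma exists_abs_deriv_smoothTransition_le : ∃ M, ∀ u, |deriv smoothTransition u| ≤ M :=
  (HasCompactSupport.intro (isCompact_Icc (a := (0 : ℝ)) (b := 1)) fun _ hu =>
    deriv_smoothTransition_of_notMem_Ioo fun hu' => hu ⟨hu'.1.le, hu'.2.le⟩)
    |>.exists_bound_of_continuous (Real.smoothTransition.contDiff.continuous_deriv le_rfl)

lemma integral_deriv_smoothTransition_mul_sq {a : ℝ} (ha : 0 < a) :
    ∫ r in Ioi (0 : ℝ), 2 * a * r * deriv smoothTransition (a * r ^ 2 - 1) = 1 := by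
  have hderiv : ∀ r ∈ Ici (0 : ℝ), HasDerivAt (fun r => smoothTransition (a * r ^ 2 - 1))
      (2 * a * r * deriv smoothTransition (a * r ^ 2 - 1)) r := fun r _ =>
    ((differentiable_smoothTransition _).hasDerivAt.comp r
      (((hasDerivAt_pow 2 r).const_mul a).sub_const 1)).congr_deriv (by ring)
  have hlim : Tendsto (fun r => smoothTransition (a * r ^ 2 - 1)) atTop (𝓝 1) := by
    refine tendsto_const_nhds.congr' ?_
    filter_upwards [((tendsto_pow_atTop two_ne_zero).const_mul_atTop ha).eventually_ge_atTop 2]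
      with r hr
    exact (Real.smoothTransition.one_of_one_le (by linarith)).symm
  rw [integral_Ioi_of_hasDerivAt_of_nonneg' hderiv (fun r hr => ?_) hlim]
  · simp [Real.smoothTransition.zero_of_nonpos]
  · have := Real.smoothTransition.monotone.deriv_nonneg (x := a * r ^ 2 - 1)
    have := mem_Ioi.1 hr
    positivity

lemma hasFDerivAt_inv_norm_pow {F : Type*} [NormedAddCommGroup F] [InnerProductSpace ℝ F] (n : ℕ)
    {z : F} (hz : z ≠ 0) :
    HasFDerivAt (fun y : F => (‖y‖ ^ n)⁻¹)
      ((-(n : ℝ) * (‖z‖ ^ (n + 2))⁻¹) • innerSL ℝ z) z := by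
  have hz' : ‖z‖ ≠ 0 := norm_ne_zero_iff.2 hz
  have hnorm : HasFDerivAt (fun y : F => ‖y‖) (‖z‖⁻¹ • innerSL ℝ z) z := by
    have := (hasStrictFDerivAt_norm_sq z).hasFDerivAt.sqrt (by positivity)
    simp only [Real.sqrt_sq (norm_nonneg _)] at this
    refine this.congr_fderiv ?_
    ext w
    simp only [one_div, mul_inv_rev, smul_apply, coe_innerSL_apply, nsmul_eq_mul,
      Nat.cast_ofNat, smul_eq_mul]
    field_simp
  refine ((hasDerivAt_inv (pow_ne_zero n hz')).comp_hasFDerivAt z (hnorm.pow n)).congr_fderiv ?_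
  ext w
  rcases n with _ | n
  · simp
  · simp only [add_tsub_cancel_right, nsmul_eq_mul, Nat.cast_add, Nat.cast_one, neg_smul,
      neg_apply, smul_apply, coe_innerSL_apply, smul_eq_mul, neg_add_rev]
    field_simp
    ring

variable {d : ℕ} {a : ℝ}

local notation "ℝᵈ" => EuclideanSpace ℝ (Fin d)

lemma inner_self_gradN (z : ℝᵈ) : ⟪z, gradN d z⟫ = (sphereVol d)⁻¹ * ‖z‖ ^ 2 * (‖z‖ ^ d)⁻¹ := by
  rw [gradN, inner_smul_right, real_inner_self_eq_norm_sq]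
  ring

lemma fderiv_gradN {z : ℝᵈ} (hz : z ≠ 0) (w : ℝᵈ) : fderiv ℝ (gradN d) z w = hessN d z w := by
  have hgradN : gradN d = (fun y : ℝᵈ => (sphereVol d)⁻¹ * (‖y‖ ^ d)⁻¹) • id := by
    ext1 y
    simp only [gradN, mul_inv, Pi.smul_apply', id]
  rw [hgradN, (((hasFDerivAt_inv_norm_pow d hz).const_mul (sphereVol d)⁻¹).smul
    (hasFDerivAt_id z)).fderiv]
  simp only [neg_mul, neg_smul, smul_neg, id_eq, add_apply, smul_apply,
    ContinuousLinearMap.id_apply, ContinuousLinearMap.smulRight_apply, neg_apply,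
    coe_innerSL_apply, smul_eq_mul, hessN]
  module

lemma hessN_symm (z u w : ℝᵈ) : ⟪hessN d z u, w⟫ = ⟪u, hessN d z w⟫ := by
  simp only [hessN, inner_smul_left, inner_smul_right, inner_sub_left, inner_sub_right,
    real_inner_comm, conj_trivial]
  ring

lemma sum_inner_hessN_eq_zero {ι : Type*} [Fintype ι] (e : OrthonormalBasis ι ℝ ℝᵈ) {z : ℝᵈ}
    (hz : z ≠ 0) : ∑ i, ⟪e i, hessN d z (e i)⟫ = 0 := by
  have hz' : ‖z‖ ≠ 0 := norm_ne_zero_iff.2 hz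
  have hsum : ∑ i, ⟪z, e i⟫ * ⟪e i, z⟫ = ‖z‖ ^ 2 := by
    rw [e.sum_inner_mul_inner, real_inner_self_eq_norm_sq]
  have hcard : (Fintype.card ι : ℝ) = d := by
    rw [← Module.finrank_eq_card_basis e.toBasis, finrank_euclideanSpace_fin]
  simp only [hessN, inner_smul_right, inner_sub_right, real_inner_self_eq_norm_sq, mul_assoc,
    ← Finset.mul_sum, Finset.sum_sub_distrib, hsum]
  simp only [e.norm_eq_one, one_pow, Finset.sum_const, Finset.card_univ, nsmul_eq_mul, hcard,
    mul_one, pow_add]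
  field_simp
  ring

/-- The kernel `gradN d`, smoothly cut off to zero inside the ball of radius `1 / √a` and left
unchanged outside the ball of radius `√(2 / a)`, so that it is smooth and converges to `gradN d`
as `a → ∞`. -/
noncomputable def truncGradN (d : ℕ) (a : ℝ) (z : EuclideanSpace ℝ (Fin d)) :
    EuclideanSpace ℝ (Fin d) :=
  smoothTransition (a * ‖z‖ ^ 2 - 1) • gradN d z

lemma truncGradN_of_le {z : ℝᵈ} (hz : a * ‖z‖ ^ 2 ≤ 1) : truncGradN d a z = 0 := by
  rw [truncGradN, Real.smoothTransition.zero_of_nonpos (by linarith), zero_smul]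

lemma truncGradN_of_ge {z : ℝᵈ} (hz : 2 ≤ a * ‖z‖ ^ 2) : truncGradN d a z = gradN d z := by
  rw [truncGradN, Real.smoothTransition.one_of_one_le (by linarith), one_smul]

lemma truncGradN_eventuallyEq_zero : truncGradN d a =ᶠ[𝓝 0] 0 := by
  have : ContinuousAt (fun z : ℝᵈ => a * ‖z‖ ^ 2) 0 := by fun_prop
  filter_upwards [this.eventually_lt (continuousAt_const (y := 1)) (by simp)] with z hz
  exact truncGradN_of_le hz.le

variable [NeZero d]

lemma sphereVol_pos : 0 < sphereVol d :=
  mul_pos (mod_cast NeZero.pos d)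
    (ENNReal.toReal_pos (measure_ball_pos _ _ one_pos).ne' measure_ball_lt_top.ne)

lemma contDiffAt_gradN {z : ℝᵈ} (hz : z ≠ 0) {n : WithTop ℕ∞} : ContDiffAt ℝ n (gradN d) z := by
  have hd := sphereVol_pos (d := d)
  unfold gradN
  exact ((contDiffAt_const.mul ((contDiffAt_id.norm ℝ hz).pow d)).inv (by positivity)).smul
    contDiffAt_id

lemma norm_gradN (z : ℝᵈ) : ‖gradN d z‖ = (sphereVol d)⁻¹ * ‖z‖ * (‖z‖ ^ d)⁻¹ := by
  rw [gradN, norm_smul, norm_inv, norm_mul, norm_pow, norm_norm,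
    Real.norm_of_nonneg sphereVol_pos.le]
  ring

lemma norm_hessN_le (z w : ℝᵈ) :
    ‖hessN d z w‖ ≤ (sphereVol d)⁻¹ * (1 + d) * (‖z‖ ^ d)⁻¹ * ‖w‖ := by
  rcases eq_or_ne z 0 with rfl | hz
  · simp [hessN, NeZero.ne d]
  have : 0 < ‖z‖ := norm_pos_iff.2 hz
  have hd := sphereVol_pos (d := d)
  calc
    ‖hessN d z w‖ ≤ (sphereVol d)⁻¹ * (‖(‖z‖ ^ d)⁻¹ • w‖ +
        ‖((d : ℝ) * (‖z‖ ^ (d + 2))⁻¹ * ⟪z, w⟫) • z‖) := by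
      rw [hessN, norm_smul, Real.norm_of_nonneg (by positivity)]
      gcongr
      exact norm_sub_le _ _
    _ ≤ (sphereVol d)⁻¹ * ((‖z‖ ^ d)⁻¹ * ‖w‖ +
        (d : ℝ) * (‖z‖ ^ (d + 2))⁻¹ * (‖z‖ * ‖w‖) * ‖z‖) := by
      simp only [norm_smul, norm_mul, norm_inv, norm_pow, norm_norm, Real.norm_natCast]
      gcongr
      exact norm_inner_le_norm z w
    _ = _ := by
      rw [pow_add]
      field_simp

lemma locallyIntegrable_gradN : LocallyIntegrable (gradN d) := by
  have hmeas : Measurable (gradN d) := by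
    unfold gradN
    fun_prop
  refine locallyIntegrable_of_norm_le_rpow (C := (sphereVol d)⁻¹) (α := d - 1) ?_ ?_ ?_
    hmeas.aestronglyMeasurable
  · simpa using NeZero.one_le
  · simp
  · filter_upwards [Measure.ae_ne volume 0] with z hz
    have hz' : 0 < ‖z‖ := norm_pos_iff.2 hz
    rw [norm_gradN, neg_sub, Real.rpow_sub hz', Real.rpow_one, Real.rpow_natCast, mul_assoc,
      div_eq_mul_inv]

lemma contDiff_truncGradN {n : ℕ∞} : ContDiff ℝ n (truncGradN d a) := by
  refine contDiff_iff_contDiffAt.2 fun z => ?_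
  rcases eq_or_ne z 0 with rfl | hz
  · exact contDiffAt_const.congr_of_eventuallyEq truncGradN_eventuallyEq_zero
  · refine ContDiffAt.smul (Real.smoothTransition.contDiffAt.comp z ?_) (contDiffAt_gradN hz)
    exact (contDiffAt_const.mul (contDiff_norm_sq ℝ).contDiffAt).sub contDiffAt_const

lemma fderiv_truncGradN (z w : ℝᵈ) : fderiv ℝ (truncGradN d a) z w =
    smoothTransition (a * ‖z‖ ^ 2 - 1) • hessN d z w +
      (2 * a * deriv smoothTransition (a * ‖z‖ ^ 2 - 1) * ⟪z, w⟫) • gradN d z := by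
  rcases eq_or_ne z 0 with rfl | hz
  · rw [truncGradN_eventuallyEq_zero.fderiv_eq]
    simp [Real.smoothTransition.zero_of_nonpos]
  · have hT : HasFDerivAt (fun z : ℝᵈ => smoothTransition (a * ‖z‖ ^ 2 - 1))
        (deriv smoothTransition (a * ‖z‖ ^ 2 - 1) • a • 2 • innerSL ℝ z) z :=
      (differentiable_smoothTransition _).hasDerivAt.comp_hasFDerivAt z
        (((hasStrictFDerivAt_norm_sq z).hasFDerivAt.const_mul a).sub_const 1)
    have hG := ((contDiffAt_gradN hz (n := 1)).differentiableAt one_ne_zero).hasFDerivAt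
    have hK : truncGradN d a = (fun z : ℝᵈ => smoothTransition (a * ‖z‖ ^ 2 - 1)) • gradN d := rfl
    rw [hK, (hT.smul hG).fderiv]
    simp only [add_apply, smul_apply, fderiv_gradN hz, ContinuousLinearMap.smulRight_apply,
      coe_innerSL_apply, nsmul_eq_mul, Nat.cast_ofNat, smul_eq_mul]
    module

lemma fderiv_truncGradN_of_ge {z : ℝᵈ} (hz : 2 ≤ a * ‖z‖ ^ 2) (w : ℝᵈ) :
    fderiv ℝ (truncGradN d a) z w = hessN d z w := by
  rw [fderiv_truncGradN, Real.smoothTransition.one_of_one_le (by linarith),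
    deriv_smoothTransition_of_notMem_Ioo fun hu => by linarith [hu.2]]
  simp

lemma isSymmetric_fderiv_truncGradN (z : ℝᵈ) :
    (fderiv ℝ (truncGradN d a) z : ℝᵈ →ₗ[ℝ] ℝᵈ).IsSymmetric := fun u w => by
  simp only [ContinuousLinearMap.coe_coe, fderiv_truncGradN, gradN, inner_add_left,
    inner_add_right, inner_smul_left, inner_smul_right, hessN_symm, conj_trivial,
    real_inner_comm z]
  ring

lemma divergence_truncGradN (z : ℝᵈ) : divergence (truncGradN d a) z =
    2 * a * deriv smoothTransition (a * ‖z‖ ^ 2 - 1) * ⟪z, gradN d z⟫ := by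
  let e := stdOrthonormalBasis ℝ ℝᵈ
  rcases eq_or_ne z 0 with rfl | hz
  · simp [divergence, truncGradN_eventuallyEq_zero.fderiv_eq]
  · simp only [divergence, LinearMap.trace_eq_sum_inner _ e, ContinuousLinearMap.coe_coe,
      fderiv_truncGradN, inner_add_right, inner_smul_right, Finset.sum_add_distrib,
      ← Finset.mul_sum, sum_inner_hessN_eq_zero e hz, mul_assoc, e.sum_inner_mul_inner]
    simp

lemma divergence_truncGradN_nonneg (ha : 0 ≤ a) (z : ℝᵈ) : 0 ≤ divergence (truncGradN d a) z := by
  rw [divergence_truncGradN, inner_self_gradN]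
  have := Real.smoothTransition.monotone.deriv_nonneg (x := a * ‖z‖ ^ 2 - 1)
  have := sphereVol_pos (d := d)
  positivity

lemma divergence_truncGradN_of_ge {z : ℝᵈ} (hz : 2 ≤ a * ‖z‖ ^ 2) :
    divergence (truncGradN d a) z = 0 := by
  rw [divergence_truncGradN, deriv_smoothTransition_of_notMem_Ioo fun hu => by linarith [hu.2],
    mul_zero, zero_mul]

lemma exists_norm_fderiv_truncGradN_le : ∃ C, ∀ a ≥ 0, ∀ z w : ℝᵈ,
    ‖fderiv ℝ (truncGradN d a) z w‖ ≤ C * (‖z‖ ^ d)⁻¹ * ‖w‖ := by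
  obtain ⟨M, hM⟩ := exists_abs_deriv_smoothTransition_le
  have hd := sphereVol_pos (d := d)
  refine ⟨(sphereVol d)⁻¹ * (1 + d) + 4 * M * (sphereVol d)⁻¹, fun a ha z w => ?_⟩
  have hscale : a * ‖z‖ ^ 2 * |deriv smoothTransition (a * ‖z‖ ^ 2 - 1)| ≤ 2 * M := by
    by_cases hz : a * ‖z‖ ^ 2 ≤ 2
    · gcongr
      exact hM _
    · rw [deriv_smoothTransition_of_notMem_Ioo fun hu => hz (by linarith [hu.2])]
      simpa using (abs_nonneg _).trans (hM 0)
  have hhess : ‖smoothTransition (a * ‖z‖ ^ 2 - 1) • hessN d z w‖ ≤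
      (sphereVol d)⁻¹ * (1 + d) * (‖z‖ ^ d)⁻¹ * ‖w‖ := by
    rw [norm_smul, Real.norm_of_nonneg (Real.smoothTransition.nonneg _)]
    exact (mul_le_of_le_one_left (norm_nonneg _) (Real.smoothTransition.le_one _)).trans
      (norm_hessN_le z w)
  have hgrad : ‖(2 * a * deriv smoothTransition (a * ‖z‖ ^ 2 - 1) * ⟪z, w⟫) • gradN d z‖ ≤
      4 * M * (sphereVol d)⁻¹ * (‖z‖ ^ d)⁻¹ * ‖w‖ := by
    rw [norm_smul, norm_gradN, Real.norm_eq_abs, abs_mul, abs_mul, abs_of_nonneg (by positivity)]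
    calc
      _ ≤ 2 * a * |deriv smoothTransition (a * ‖z‖ ^ 2 - 1)| * (‖z‖ * ‖w‖) *
          ((sphereVol d)⁻¹ * ‖z‖ * (‖z‖ ^ d)⁻¹) := by
        gcongr
        exact abs_real_inner_le_norm z w
      _ = 2 * (a * ‖z‖ ^ 2 * |deriv smoothTransition (a * ‖z‖ ^ 2 - 1)|) *
          ((sphereVol d)⁻¹ * (‖z‖ ^ d)⁻¹ * ‖w‖) := by ring
      _ ≤ 2 * (2 * M) * ((sphereVol d)⁻¹ * (‖z‖ ^ d)⁻¹ * ‖w‖) := by gcongr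
      _ = _ := by ring
  rw [fderiv_truncGradN, add_mul, add_mul]
  exact (norm_add_le _ _).trans (add_le_add hhess hgrad)

lemma integral_divergence_truncGradN (ha : 0 < a) :
    ∫ z, divergence (truncGradN d a) z = 1 := by
  have hd := sphereVol_pos (d := d)
  have hradial : ∀ r ∈ Ioi (0 : ℝ), r ^ (d - 1) * (2 * a *
      deriv smoothTransition (a * r ^ 2 - 1) * ((sphereVol d)⁻¹ * r ^ 2 * (r ^ d)⁻¹)) =
      (sphereVol d)⁻¹ * (2 * a * r * deriv smoothTransition (a * r ^ 2 - 1)) := fun r hr => by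
    have := mem_Ioi.1 hr
    rw [← pow_sub_one_mul (NeZero.ne d) r]
    field_simp
  simp_rw [divergence_truncGradN, inner_self_gradN]
  rw [integral_fun_norm_addHaar volume fun r => 2 * a * deriv smoothTransition (a * r ^ 2 - 1) *
    ((sphereVol d)⁻¹ * r ^ 2 * (r ^ d)⁻¹)]
  simp only [finrank_euclideanSpace_fin, smul_eq_mul, nsmul_eq_mul]
  rw [setIntegral_congr_fun measurableSet_Ioi hradial, integral_const_mul,
    integral_deriv_smoothTransition_mul_sq ha, ← mul_assoc, mul_one]
  exact mul_inv_cancel₀ hd.ne'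

lemma tendsto_support_divergence_truncGradN :
    Tendsto (fun a => Function.support (divergence (truncGradN d a))) atTop (𝓝 0).smallSets := by
  refine (HasBasis.tendsto_right_iff (nhds_basis_ball.smallSets)).2 fun r hr => ?_
  filter_upwards [eventually_gt_atTop 0, eventually_ge_atTop (2 / r ^ 2)] with a ha har z hz
  contrapose! hz
  refine Function.notMem_support.2 (divergence_truncGradN_of_ge ?_)
  rw [mem_ball_zero_iff, not_lt] at hz
  calc
    2 ≤ a * r ^ 2 := (div_le_iff₀ (by positivity)).1 har
    _ ≤ a * ‖z‖ ^ 2 := by gcongr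

end Kernel

section Commutator

variable {d : ℕ} [NeZero d] {s : Set (EuclideanSpace ℝ (Fin d))} {x : EuclideanSpace ℝ (Fin d)}
  {f : EuclideanSpace ℝ (Fin d) → EuclideanSpace ℝ (Fin d)}

local notation "ℝᵈ" => EuclideanSpace ℝ (Fin d)

lemma eventually_hasFDerivAt_setIntegral_gradN (hs : MeasurableSet s)
    (hbdd : Bornology.IsBounded s) (hx : x ∉ frontier s) :
    ∀ᶠ a in atTop, HasFDerivAt (fun z => ∫ y in s, gradN d (z - y))
      (∫ y in s, fderiv ℝ (truncGradN d a) (x - y)) x := by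
  obtain ⟨r, hr, hsx⟩ :=
    eventually_nhds_iff_ball.1 (eventually_mem_iff_of_notMem_frontier hx)
  filter_upwards [eventually_gt_atTop 0, eventually_ge_atTop (2 / (r / 2) ^ 2)] with a ha har
  refine hasFDerivAt_setIntegral_comp_sub_of_eq_off_ball locallyIntegrable_gradN
    contDiff_truncGradN (r := r / 2) (fun z hz => truncGradN_of_ge ?_) hs hbdd
    (half_pos hr) (by rwa [mul_div_cancel₀ _ two_ne_zero])
  calc
    2 ≤ a * (r / 2) ^ 2 := (div_le_iff₀ (by positivity)).1 har
    _ ≤ a * ‖z‖ ^ 2 := by gcongr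

lemma tendsto_setIntegral_divergence_truncGradN (hs : MeasurableSet s) (hx : x ∉ frontier s)
    (hf : Continuous f) :
    Tendsto (fun a => ∫ y in s, divergence (truncGradN d a) (x - y) • f y) atTop
      (𝓝 (s.indicator f x)) := by
  have hcont : ContinuousAt (s.indicator f) x := hf.continuousOn.continuousAt_indicator hx
  have hconv := convolution_tendsto_right (μ := volume)
    (φ := fun a => divergence (truncGradN d a)) (g := fun _ => s.indicator f) (k := fun _ => x)
    ((eventually_ge_atTop 0).mono fun a ha => divergence_truncGradN_nonneg ha)
    ((eventually_gt_atTop 0).mono fun a ha => integral_divergence_truncGradN ha)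
    tendsto_support_divergence_truncGradN
    (.of_forall fun _ => (hf.measurable.indicator hs).aestronglyMeasurable)
    (hcont.tendsto.comp tendsto_snd) tendsto_const_nhds
  refine hconv.congr fun a => ?_
  rw [convolution_eq_swap, ← integral_indicator hs]
  simp only [indicator_smul, ContinuousLinearMap.lsmul_apply]

lemma integrableOn_hessN (hf : Continuous f)
    (hint : IntegrableOn (fun y => (‖x - y‖ ^ d)⁻¹ * ‖f y‖) s) :
    IntegrableOn (fun y => hessN d (x - y) (f y)) s := by
  have hmeas : Measurable fun y => hessN d (x - y) (f y) := by
    have := hf.measurable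
    unfold hessN
    fun_prop
  exact (hint.const_mul _).mono' hmeas.aestronglyMeasurable
    (.of_forall fun y => (norm_hessN_le _ _).trans_eq (mul_assoc _ _ _))

lemma tendsto_setIntegral_fderiv_truncGradN (hf : Continuous f)
    (hint : IntegrableOn (fun y => (‖x - y‖ ^ d)⁻¹ * ‖f y‖) s) :
    Tendsto (fun a => ∫ y in s, fderiv ℝ (truncGradN d a) (x - y) (f y)) atTop
      (𝓝 (∫ y in s, hessN d (x - y) (f y))) := by
  obtain ⟨C, hC⟩ := exists_norm_fderiv_truncGradN_le (d := d)
  refine tendsto_integral_filter_of_dominated_convergence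
    (fun y => C * ((‖x - y‖ ^ d)⁻¹ * ‖f y‖)) (.of_forall fun a => ?_) ?_ (hint.const_mul C) ?_
  · have hDK : Continuous (fderiv ℝ (truncGradN d a)) :=
      (contDiff_truncGradN (n := 1)).continuous_fderiv one_ne_zero
    exact ((hDK.comp (continuous_const.sub continuous_id)).clm_apply hf).aestronglyMeasurable
  · filter_upwards [eventually_ge_atTop 0] with a ha
    exact .of_forall fun y => (hC a ha _ _).trans_eq (mul_assoc _ _ _)
  · filter_upwards [ae_restrict_of_ae (Measure.ae_ne volume x)] with y hy
    refine tendsto_const_nhds.congr' ?_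
    have hpos : 0 < ‖x - y‖ := norm_pos_iff.2 (sub_ne_zero.2 hy.symm)
    filter_upwards [eventually_ge_atTop (2 / ‖x - y‖ ^ 2)] with a ha
    exact (fderiv_truncGradN_of_ge ((div_le_iff₀ (by positivity)).1 ha) _).symm

lemma setIntegral_fderiv_truncGradN_sub {Φ : ℝᵈ → ℝ} (hΦ : ContDiff ℝ 1 Φ)
    (hbdd : Bornology.IsBounded {y | Φ y < 0}) (a : ℝ) (x : ℝᵈ) :
    ∫ y in {y | Φ y < 0}, fderiv ℝ (truncGradN d a) (x - y) (gradient Φ x - gradient Φ y) =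
      (∫ y in {y | Φ y < 0}, fderiv ℝ (truncGradN d a) (x - y)) (gradient Φ x) -
        ∫ y in {y | Φ y < 0}, divergence (truncGradN d a) (x - y) • gradient Φ y := by
  let K : ℝᵈ → ℝᵈ := fun y => -truncGradN d a (x - y)
  have hDK : ∀ y, fderiv ℝ K y = fderiv ℝ (truncGradN d a) (x - y) := fun y => by
    have hdiff := (contDiff_truncGradN (a := a) (n := 1)).differentiable one_ne_zero (x - y)
    have hKy : HasFDerivAt K (-(fderiv ℝ (truncGradN d a) (x - y)).comp (-.id ℝ ℝᵈ)) y :=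
      (hdiff.hasFDerivAt.comp y ((hasFDerivAt_id y).const_sub x)).neg
    simp [hKy.fderiv]
  have hdivK : ∀ y, divergence K y = divergence (truncGradN d a) (x - y) := fun y => by
    rw [divergence, divergence, hDK]
  have hK : ContDiff ℝ 2 K := (contDiff_truncGradN.comp (contDiff_const.sub contDiff_id)).neg
  have hcont : Continuous (fderiv ℝ K) := hK.continuous_fderiv two_ne_zero
  have hgrad := continuous_gradient hΦ
  have hIBP := setIntegral_fderiv_gradient (μ := volume) hΦ hbdd hK fun y => by
    rw [hDK]
    exact isSymmetric_fderiv_truncGradN _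
  simp only [← hDK, ← hdivK, map_sub]
  rw [ContinuousLinearMap.integral_apply (integrableOn_of_continuous_of_isBounded hcont hbdd),
    ← hIBP]
  refine integral_sub ?_ ?_ <;>
    exact integrableOn_of_continuous_of_isBounded (hcont.clm_apply (by fun_prop)) hbdd

lemma integrableOn_inv_norm_pow_mul_norm_of_holder (hf : Continuous f)
    (hs : Bornology.IsBounded s) {γ K : ℝ} (hγ : 0 < γ) (hK : ∀ y, ‖f y‖ ≤ K * ‖x - y‖ ^ γ) :
    IntegrableOn (fun y => (‖x - y‖ ^ d)⁻¹ * ‖f y‖) s := by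
  have hkernel : LocallyIntegrable fun z : ℝᵈ => K * ‖z‖ ^ (γ - d) := by
    refine locallyIntegrable_of_norm_le_rpow (C := |K|) (α := d - γ) ?_ ?_
      (.of_forall fun z => ?_)
      (measurable_norm.pow_const _ |>.const_mul K).aestronglyMeasurable
    · simpa using NeZero.one_le
    · simpa using hγ
    · rw [norm_mul, Real.norm_eq_abs, neg_sub, Real.norm_of_nonneg (by positivity)]
  refine (integrableOn_comp_sub_left hkernel hs x).mono'
    (Measurable.aestronglyMeasurable (by fun_prop)) ?_
  filter_upwards [ae_restrict_of_ae (Measure.ae_ne volume x)] with y hy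
  have hxy : 0 < ‖x - y‖ := norm_pos_iff.2 (sub_ne_zero.2 hy.symm)
  calc
    ‖(‖x - y‖ ^ d)⁻¹ * ‖f y‖‖ = (‖x - y‖ ^ d)⁻¹ * ‖f y‖ := Real.norm_of_nonneg (by positivity)
    _ ≤ (‖x - y‖ ^ d)⁻¹ * (K * ‖x - y‖ ^ γ) := by
      gcongr
      exact hK y
    _ = K * ‖x - y‖ ^ (γ - d) := by
      rw [Real.rpow_sub hxy, Real.rpow_natCast]
      ring

theorem commutator_identity_general {Φ : ℝᵈ → ℝ} (hΦ : ContDiff ℝ 1 Φ)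
    (hbdd : Bornology.IsBounded {y | Φ y < 0}) (hx : x ∉ frontier {y | Φ y < 0})
    (hDini : IntegrableOn (fun y => (‖x - y‖ ^ d)⁻¹ * ‖gradient Φ x - gradient Φ y‖)
      {y | Φ y < 0}) :
    DifferentiableAt ℝ (fun z => -∫ y in {y | Φ y < 0}, gradN d (z - y)) x ∧
    IntegrableOn (fun y => hessN d (x - y) (gradient Φ x - gradient Φ y)) {y | Φ y < 0} ∧
    ∫ y in {y | Φ y < 0}, hessN d (x - y) (gradient Φ x - gradient Φ y) =
      -(fderiv ℝ (fun z => -∫ y in {y | Φ y < 0}, gradN d (z - y)) x (gradient Φ x)) -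
        Set.indicator {y | Φ y < 0} (fun _ => (1 : ℝ)) x • gradient Φ x := by
  have hD : MeasurableSet {y | Φ y < 0} :=
    measurableSet_lt hΦ.continuous.measurable measurable_const
  have hgrad := continuous_gradient hΦ
  have hdiff : Continuous fun y => gradient Φ x - gradient Φ y := continuous_const.sub hgrad
  have hderiv := eventually_hasFDerivAt_setIntegral_gradN hD hbdd hx
  refine ⟨hderiv.exists.choose_spec.neg.differentiableAt, integrableOn_hessN hdiff hDini,
    tendsto_nhds_unique (tendsto_setIntegral_fderiv_truncGradN hdiff hDini) ?_⟩
  rw [fderiv_fun_neg, neg_apply, neg_neg, ← indicator_smul_apply_left]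
  simp only [one_smul]
  refine (tendsto_const_nhds.sub
    (tendsto_setIntegral_divergence_truncGradN hD hx hgrad)).congr' ?_
  filter_upwards [hderiv] with a ha
  rw [setIntegral_fderiv_truncGradN_sub hΦ hbdd, ha.fderiv]

end Commutator

/-- Lemma (commutator identity): the commutator formula for the material derivative
of the transported gradient. -/
theorem commutator_identity
    (d : ℕ) (hd : 2 ≤ d) (γ : ℝ) (hγ : γ ∈ Set.Ioo (0:ℝ) 1)
    (D : Set (EuclideanSpace ℝ (Fin d))) (Φ : EuclideanSpace ℝ (Fin d) → ℝ)
    (hDo : IsOpen D) (hDb : Bornology.IsBounded D) (hΦ : IsDefining d γ D Φ)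
    (x : EuclideanSpace ℝ (Fin d)) (hx : x ∉ frontier D) :
    DifferentiableAt ℝ
      (fun z : EuclideanSpace ℝ (Fin d) => -(∫ y in D, gradN d (z - y))) x ∧
    IntegrableOn (fun y => hessN d (x - y) (gradient Φ x - gradient Φ y)) D volume ∧
    (∫ y in D, hessN d (x - y) (gradient Φ x - gradient Φ y))
      = -(fderiv ℝ (fun z : EuclideanSpace ℝ (Fin d) => -(∫ y in D, gradN d (z - y))) x
            (gradient Φ x))
        - Set.indicator D (fun _ => (1:ℝ)) x • gradient Φ x := by
  have : NeZero d := ⟨by omega⟩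
  obtain ⟨hC, ⟨K, hK⟩, rfl, -, -⟩ := hΦ
  exact commutator_identity_general hC hDb hx <| integrableOn_inv_norm_pow_mul_norm_of_holder
    (continuous_const.sub (continuous_gradient hC)) hDb hγ.1 fun y => hK x y
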